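/- Let X_n = (ℂⁿ,‖·‖) be a Banach lattice (i.e. |z_j| ≤ |w_j| for all j implies ‖z‖ ≤ ‖w‖), let J ⊆ ℕ₀ⁿ be an index set and m ≥ 1 with J_m = {α ∈ J : |α| = m} nonempty. Define the m-homogeneous Bohr radius K_m(B_{X_n}, J) = sup{ r ∈ [0,1) : Σ_{α∈J_m} |c_α(P)| |z^α| ≤ ‖P‖ for every P ∈ 𝒫_{J_m}(X_n) and every z ∈ ℂⁿ with ‖z‖ ≤ r }. Then K_m(B_{X_n}, J) = χ_mon(𝒫_{J_m}(X_n))^{−1/m}. -/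

import Mathlib

/-!
Write `A(c, z) = ∑ |c_α| |z^α|`. Choosing the signs `ε_α` so that every term `ε_α c_α z^α` becomes
`|c_α| |z^α|` shows that `K ≥ 0` is an unconditionality constant if and only if
`A(c, z) ≤ K ‖P‖` for all `P` and all `z` in the unit ball (`uncon_iff`). By `m`-homogeneity,
`r ∈ (0, 1)` is admissible for the Bohr radius if and only if `A(c, z) ≤ r⁻ᵐ ‖P‖` on the unit ball.
Hence the two extremal problems correspond under `K = r⁻ᵐ`.

The junk values of `sSup` and `sInf` are excluded by three facts: the supremum defining `‖P‖` is over
a bounded set, since the lattice property bounds every coordinate on the unit ball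
(`bddAbove_polNorm`); the set of unconditionality constants is nonempty, since the Cauchy estimate
`|c_α z^α| ≤ ‖P‖` (`cauchy_estimate`) makes the number of indices such a constant; and every
unconditionality constant is at least `1`, since some `P` has `‖P‖ > 0`. The Cauchy estimate is
obtained by averaging over a finite group of roots of unity in each coordinate.
-/

/-- The set `Λ(m,n)` of all multi-indices `α ∈ ℕ₀ⁿ` with `|α| = m`. -/
def homIdx (m n : ℕ) : Finset (Fin n → ℕ) :=
  (Fintype.piFinset fun _ : Fin n => Finset.range (m + 1)).filter fun α => ∑ j, α j = m

/-- The norm of the polynomial `z ↦ ∑_{α ∈ I} c_α z^α` on the unit ball of `(ℂⁿ, ν)`. -/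
noncomputable def polNorm (n : ℕ) (ν : (Fin n → ℂ) → ℝ) (I : Finset (Fin n → ℕ))
    (c : (Fin n → ℕ) → ℂ) : ℝ :=
  sSup {t : ℝ | ∃ z : Fin n → ℂ, ν z ≤ 1 ∧ t = ‖∑ α ∈ I, c α * ∏ j, z j ^ α j‖}

/-- The unconditional basis constant `χ_mon(𝒫_I(X_n))` of the monomial basis. -/
noncomputable def unconBasisConst (n : ℕ) (ν : (Fin n → ℂ) → ℝ) (I : Finset (Fin n → ℕ)) : ℝ :=
  sInf {K : ℝ | 0 ≤ K ∧ ∀ c ε : (Fin n → ℕ) → ℂ, (∀ α ∈ I, ‖ε α‖ = 1) →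
    polNorm n ν I (fun α => ε α * c α) ≤ K * polNorm n ν I c}

/-- Orthogonality of characters of `ℤ/N`; the exponent `b + (N - a)` stands for `b - a`. -/
lemma sum_root_pow {N : ℕ} {ζ : ℂ} (hζ : IsPrimitiveRoot ζ N) {a b : ℕ}
    (ha : a < N) (hb : b < N) :
    ∑ k : Fin N, (ζ ^ (k : ℕ)) ^ (b + (N - a)) = if b = a then (N : ℂ) else 0 := by
  have h1 : ∀ k : ℕ, (ζ ^ k) ^ (b + (N - a)) = (ζ ^ (b + (N - a))) ^ k := fun k => by
    rw [← pow_mul, ← pow_mul, mul_comm]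
  simp only [h1]
  rw [Fin.sum_univ_eq_sum_range (fun k => (ζ ^ (b + (N - a))) ^ k) N]
  split_ifs with h
  · subst h
    have : b + (N - b) = N := by omega
    simp [this, hζ.pow_eq_one]
  · have hne : ζ ^ (b + (N - a)) ≠ 1 := by
      intro h2
      obtain ⟨q, hq⟩ := (hζ.pow_eq_one_iff_dvd _).1 h2
      have hq1 : q = 1 := by
        have h3 : 0 < q := by
          rcases Nat.eq_zero_or_pos q with h0 | h0
          · subst h0; omega
          · exact h0
        have h4 : q < 2 := by
          by_contra h5
          have : N * 2 ≤ N * q := Nat.mul_le_mul_left _ (by omega)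
          omega
        omega
      subst hq1
      omega
    rw [geom_sum_eq hne, ← pow_mul, mul_comm, pow_mul, hζ.pow_eq_one]
    simp

/-- A single term `c_α z^α` is an average of rotated values of the polynomial. -/
lemma average_roots {n N : ℕ} {ζ : ℂ} (hζ : IsPrimitiveRoot ζ N) (I : Finset (Fin n → ℕ))
    (hI : ∀ α ∈ I, ∀ j, α j < N) (c : (Fin n → ℕ) → ℂ) (z : Fin n → ℂ)
    {α : Fin n → ℕ} (hα : α ∈ I) :
    ∑ k : Fin n → Fin N, (∏ j, (ζ ^ (k j : ℕ)) ^ (N - α j)) *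
        ∑ β ∈ I, c β * ∏ j, (ζ ^ (k j : ℕ) * z j) ^ β j
      = (N : ℂ) ^ n * (c α * ∏ j, z j ^ α j) := by
  have h1 : ∀ k : Fin n → Fin N, (∏ j, (ζ ^ (k j : ℕ)) ^ (N - α j)) *
        ∑ β ∈ I, c β * ∏ j, (ζ ^ (k j : ℕ) * z j) ^ β j
      = ∑ β ∈ I, (c β * ∏ j, z j ^ β j) * ∏ j, (ζ ^ (k j : ℕ)) ^ (β j + (N - α j)) := by
    intro k
    rw [Finset.mul_sum]
    refine Finset.sum_congr rfl fun β _ => ?_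
    simp only [mul_pow, pow_add, Finset.prod_mul_distrib]
    ring
  simp only [h1]
  rw [Finset.sum_comm]
  have h2 : ∀ β ∈ I, ∑ k : Fin n → Fin N,
      (c β * ∏ j, z j ^ β j) * ∏ j, (ζ ^ (k j : ℕ)) ^ (β j + (N - α j))
      = if β = α then (N : ℂ) ^ n * (c α * ∏ j, z j ^ α j) else 0 := by
    intro β hβ
    rw [← Finset.mul_sum]
    have h3 := Finset.prod_univ_sum (fun _ : Fin n => (Finset.univ : Finset (Fin N)))
      (fun j k => (ζ ^ (k : ℕ)) ^ (β j + (N - α j)))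
    rw [Fintype.piFinset_univ] at h3
    rw [← h3]
    have h4 : ∀ j, ∑ k : Fin N, (ζ ^ (k : ℕ)) ^ (β j + (N - α j))
        = if β j = α j then (N : ℂ) else 0 := fun j => sum_root_pow hζ (hI α hα j) (hI β hβ j)
    simp only [h4]
    split_ifs with h
    · subst h
      simp [mul_comm]
    · obtain ⟨j, hj⟩ := Function.ne_iff.1 h
      exact mul_eq_zero_of_right _ (Finset.prod_eq_zero (Finset.mem_univ j) (if_neg hj))
  rw [Finset.sum_congr rfl h2]
  simp [hα]

section Lattice

variable {n : ℕ} {ν : (Fin n → ℂ) → ℝ}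

lemma nu_zero (hsmul : ∀ (a : ℂ) (z : Fin n → ℂ), ν (a • z) = ‖a‖ * ν z) : ν 0 = 0 := by
  simpa using hsmul 0 0

lemma nu_nonneg (hsmul : ∀ (a : ℂ) (z : Fin n → ℂ), ν (a • z) = ‖a‖ * ν z)
    (hmono : ∀ z w : Fin n → ℂ, (∀ j, ‖z j‖ ≤ ‖w j‖) → ν z ≤ ν w) (z : Fin n → ℂ) :
    0 ≤ ν z := by
  rw [← nu_zero hsmul]
  exact hmono _ _ (by simp)

/-- By the lattice property `|z_j| ν(e_j) ≤ ν(z)`, so coordinates are bounded on the unit ball. -/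
lemma coord_le (hdef : ∀ z, ν z = 0 → z = 0)
    (hsmul : ∀ (a : ℂ) (z : Fin n → ℂ), ν (a • z) = ‖a‖ * ν z)
    (hmono : ∀ z w : Fin n → ℂ, (∀ j, ‖z j‖ ≤ ‖w j‖) → ν z ≤ ν w)
    {z : Fin n → ℂ} (hz : ν z ≤ 1) (j : Fin n) : ‖z j‖ ≤ 1 / ν (Pi.single j 1) := by
  have hpos : 0 < ν (Pi.single j 1) := by
    refine lt_of_le_of_ne (nu_nonneg hsmul hmono _) fun h => ?_
    have := congrFun (hdef _ h.symm) j
    simp at this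
  rw [le_div_iff₀ hpos, ← hsmul]
  refine le_trans (hmono _ _ fun i => ?_) hz
  by_cases h : i = j
  · subst h; simp
  · simp [h]

lemma bddAbove_polNorm (hdef : ∀ z, ν z = 0 → z = 0)
    (hsmul : ∀ (a : ℂ) (z : Fin n → ℂ), ν (a • z) = ‖a‖ * ν z)
    (hmono : ∀ z w : Fin n → ℂ, (∀ j, ‖z j‖ ≤ ‖w j‖) → ν z ≤ ν w)
    (I : Finset (Fin n → ℕ)) (c : (Fin n → ℕ) → ℂ) :
    BddAbove {t : ℝ | ∃ z : Fin n → ℂ, ν z ≤ 1 ∧ t = ‖∑ α ∈ I, c α * ∏ j, z j ^ α j‖} := by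
  refine ⟨∑ α ∈ I, ‖c α‖ * ∏ j, (1 / ν (Pi.single j 1)) ^ α j, ?_⟩
  rintro t ⟨z, hz, rfl⟩
  refine norm_sum_le_of_le _ fun α _ => ?_
  rw [norm_mul, norm_prod]
  refine mul_le_mul_of_nonneg_left ?_ (norm_nonneg _)
  refine Finset.prod_le_prod (fun _ _ => norm_nonneg _) fun j _ => ?_
  rw [norm_pow]
  exact pow_le_pow_left₀ (norm_nonneg _) (coord_le hdef hsmul hmono hz j) _

lemma le_polNorm (hdef : ∀ z, ν z = 0 → z = 0)
    (hsmul : ∀ (a : ℂ) (z : Fin n → ℂ), ν (a • z) = ‖a‖ * ν z)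
    (hmono : ∀ z w : Fin n → ℂ, (∀ j, ‖z j‖ ≤ ‖w j‖) → ν z ≤ ν w)
    (I : Finset (Fin n → ℕ)) (c : (Fin n → ℕ) → ℂ) {z : Fin n → ℂ} (hz : ν z ≤ 1) :
    ‖∑ α ∈ I, c α * ∏ j, z j ^ α j‖ ≤ polNorm n ν I c :=
  le_csSup (bddAbove_polNorm hdef hsmul hmono I c) ⟨z, hz, rfl⟩

lemma polNorm_le (hsmul : ∀ (a : ℂ) (z : Fin n → ℂ), ν (a • z) = ‖a‖ * ν z)
    (I : Finset (Fin n → ℕ)) (c : (Fin n → ℕ) → ℂ) {B : ℝ}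
    (h : ∀ z, ν z ≤ 1 → ‖∑ α ∈ I, c α * ∏ j, z j ^ α j‖ ≤ B) : polNorm n ν I c ≤ B := by
  refine csSup_le ⟨_, 0, by rw [nu_zero hsmul]; exact zero_le_one, rfl⟩ ?_
  rintro t ⟨z, hz, rfl⟩
  exact h z hz

lemma polNorm_nonneg (I : Finset (Fin n → ℕ)) (c : (Fin n → ℕ) → ℂ) : 0 ≤ polNorm n ν I c :=
  Real.sSup_nonneg (by rintro t ⟨z, _, rfl⟩; exact norm_nonneg _)

lemma cauchy_estimate (hdef : ∀ z, ν z = 0 → z = 0)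
    (hsmul : ∀ (a : ℂ) (z : Fin n → ℂ), ν (a • z) = ‖a‖ * ν z)
    (hmono : ∀ z w : Fin n → ℂ, (∀ j, ‖z j‖ ≤ ‖w j‖) → ν z ≤ ν w)
    {N : ℕ} (hN : N ≠ 0) (I : Finset (Fin n → ℕ)) (hI : ∀ α ∈ I, ∀ j, α j < N)
    (c : (Fin n → ℕ) → ℂ) {z : Fin n → ℂ} (hz : ν z ≤ 1) {α : Fin n → ℕ} (hα : α ∈ I) :
    ‖c α‖ * ‖∏ j, z j ^ α j‖ ≤ polNorm n ν I c := by
  have hζ := Complex.isPrimitiveRoot_exp N hN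
  set ζ := Complex.exp (2 * Real.pi * Complex.I / N)
  have hζ1 : ‖ζ‖ = 1 := hζ.norm'_eq_one hN
  have h := average_roots hζ I hI c z hα
  have h2 : ‖(N : ℂ) ^ n * (c α * ∏ j, z j ^ α j)‖ ≤ (N : ℝ) ^ n * polNorm n ν I c := by
    rw [← h]
    refine (norm_sum_le_of_le (f := fun k : Fin n → Fin N => _)
      (n := fun _ => polNorm n ν I c) _ fun k _ => ?_).trans ?_
    · rw [norm_mul, norm_prod]
      simp only [norm_pow, hζ1, one_pow, Finset.prod_const_one, one_mul]
      exact le_polNorm hdef hsmul hmono I c (z := fun j => ζ ^ (k j : ℕ) * z j)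
        ((hmono _ _ fun j => by simp [hζ1]).trans hz)
    · simp
  rw [norm_mul, norm_mul, norm_pow, Complex.norm_natCast] at h2
  exact le_of_mul_le_mul_left h2 (by positivity)

/-- Unconditionality constants in terms of absolute values: the signs can be aligned at each
point `z`. -/
lemma uncon_iff (hdef : ∀ z, ν z = 0 → z = 0)
    (hsmul : ∀ (a : ℂ) (z : Fin n → ℂ), ν (a • z) = ‖a‖ * ν z)
    (hmono : ∀ z w : Fin n → ℂ, (∀ j, ‖z j‖ ≤ ‖w j‖) → ν z ≤ ν w)
    (I : Finset (Fin n → ℕ)) (K : ℝ) :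
    (∀ c ε : (Fin n → ℕ) → ℂ, (∀ α ∈ I, ‖ε α‖ = 1) →
      polNorm n ν I (fun α => ε α * c α) ≤ K * polNorm n ν I c) ↔
    ∀ (c : (Fin n → ℕ) → ℂ) (z : Fin n → ℂ), ν z ≤ 1 →
      ∑ α ∈ I, ‖c α‖ * ‖∏ j, z j ^ α j‖ ≤ K * polNorm n ν I c := by
  constructor
  · intro h c z hz
    have hex : ∀ w : ℂ, ∃ e : ℂ, ‖e‖ = 1 ∧ e * w = (‖w‖ : ℂ) := by
      intro w
      by_cases hw : w = 0
      · exact ⟨1, by simp, by simp [hw]⟩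
      · have hw' : (‖w‖ : ℂ) ≠ 0 := by simpa using hw
        refine ⟨‖w‖ / w, ?_, by field_simp⟩
        rw [norm_div, Complex.norm_real, norm_norm, div_self (by simpa using hw)]
    choose e he1 he2 using hex
    have h1 := (le_polNorm hdef hsmul hmono I
      (fun α => e (c α * ∏ j, z j ^ α j) * c α) hz).trans
      (h c (fun α => e (c α * ∏ j, z j ^ α j)) fun α _ => he1 _)
    simp only [mul_assoc, he2] at h1
    rw [← Complex.ofReal_sum, Complex.norm_real, Real.norm_of_nonneg (by positivity)] at h1
    simpa only [norm_mul] using h1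
  · intro h c ε hε
    refine polNorm_le hsmul I _ fun z hz => le_trans ?_ (h c z hz)
    refine norm_sum_le_of_le _ fun α hα => ?_
    rw [norm_mul, norm_mul, hε α hα, one_mul]

end Lattice

lemma norm_monomial_smul {n m : ℕ} {α : Fin n → ℕ} (hα : ∑ j, α j = m) (a : ℂ)
    (z : Fin n → ℂ) : ‖∏ j, (a • z) j ^ α j‖ = ‖a‖ ^ m * ‖∏ j, z j ^ α j‖ := by
  simp only [Pi.smul_apply, smul_eq_mul, mul_pow, Finset.prod_mul_distrib, norm_mul]
  rw [Finset.prod_pow_eq_pow_sum, hα, norm_pow]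

open scoped Classical in
/-- **The `m`-homogeneous Bohr radius equals `χ_mon(𝒫_{J_m}(X_n))^{-1/m}`.** -/
theorem stmt_17 (n m : ℕ) (hm : 1 ≤ m) (ν : (Fin n → ℂ) → ℝ)
    (hdef : ∀ z, ν z = 0 → z = 0)
    (hsmul : ∀ (a : ℂ) (z : Fin n → ℂ), ν (a • z) = ‖a‖ * ν z)
    (htri : ∀ z w : Fin n → ℂ, ν (z + w) ≤ ν z + ν w)
    (hmono : ∀ z w : Fin n → ℂ, (∀ j, ‖z j‖ ≤ ‖w j‖) → ν z ≤ ν w)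
    (J : Set (Fin n → ℕ))
    (hJm : ∃ α ∈ J, ∑ j, α j = m) :
    let Jm : Finset (Fin n → ℕ) := (homIdx m n).filter fun α => α ∈ J
    sSup {r : ℝ | 0 ≤ r ∧ r < 1 ∧
        ∀ (c : (Fin n → ℕ) → ℂ) (z : Fin n → ℂ), ν z ≤ r →
          ∑ α ∈ Jm, ‖c α‖ * ‖∏ j, z j ^ α j‖ ≤ polNorm n ν Jm c}
      = unconBasisConst n ν Jm ^ (-(1 : ℝ) / (m : ℝ)) := by
  intro Jm
  have hlt : ∀ α ∈ Jm, ∀ j, α j < m + 1 := by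
    intro α hα j
    simp only [Jm, homIdx, Finset.mem_filter, Fintype.mem_piFinset, Finset.mem_range] at hα
    exact hα.1.1 j
  have hsum : ∀ α ∈ Jm, ∑ j, α j = m := by
    intro α hα
    simp only [Jm, homIdx, Finset.mem_filter] at hα
    exact hα.1.2
  obtain ⟨α₀, hα₀J, hα₀m⟩ := hJm
  have hα₀ : α₀ ∈ Jm := by
    simp only [Jm, homIdx, Finset.mem_filter, Fintype.mem_piFinset, Finset.mem_range]
    refine ⟨⟨fun j => ?_, hα₀m⟩, hα₀J⟩
    have := Finset.single_le_sum (f := α₀) (fun _ _ => Nat.zero_le _) (Finset.mem_univ j)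
    omega
  -- The constants `K` admissible in the definition of `χ_mon`, in absolute-value form.
  set S : Set ℝ := {K : ℝ | 0 ≤ K ∧ ∀ (c : (Fin n → ℕ) → ℂ) (z : Fin n → ℂ), ν z ≤ 1 →
      ∑ α ∈ Jm, ‖c α‖ * ‖∏ j, z j ^ α j‖ ≤ K * polNorm n ν Jm c} with hS
  have hχ : unconBasisConst n ν Jm = sInf S := by
    unfold unconBasisConst
    congr 1
    ext K
    exact and_congr_right fun _ => uncon_iff hdef hsmul hmono Jm K
  have hSne : (Jm.card : ℝ) ∈ S := by
    refine ⟨by positivity, fun c z hz => ?_⟩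
    rw [← nsmul_eq_mul]
    exact Finset.sum_le_card_nsmul _ _ _ fun α hα =>
      cauchy_estimate hdef hsmul hmono (Nat.succ_ne_zero m) Jm hlt c hz hα
  have hS1 : ∀ K ∈ S, 1 ≤ K := by
    rintro K ⟨_, hK⟩
    -- The polynomial with all coefficients `1` has positive norm.
    have hpos : 0 < polNorm n ν Jm (fun _ => 1) := by
      have hν1 := nu_nonneg hsmul hmono (1 : Fin n → ℂ)
      set a : ℂ := ((1 / (1 + ν 1) : ℝ) : ℂ) with ha
      have hapos : (0 : ℝ) < 1 / (1 + ν 1) := by positivity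
      have hz : ν (a • (1 : Fin n → ℂ)) ≤ 1 := by
        rw [hsmul, ha, Complex.norm_real, Real.norm_of_nonneg hapos.le, one_div_mul_eq_div,
          div_le_one (by positivity)]
        linarith
      refine lt_of_lt_of_le ?_
        (cauchy_estimate hdef hsmul hmono (Nat.succ_ne_zero m) Jm hlt (fun _ => 1) hz hα₀)
      rw [norm_monomial_smul hα₀m, ha, Complex.norm_real, Real.norm_of_nonneg hapos.le]
      simp only [Pi.one_apply, one_pow, Finset.prod_const_one, norm_one, one_mul, mul_one]
      positivity
    have h1 := polNorm_le hsmul Jm (fun _ => 1) fun z hz => le_trans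
      (norm_sum_le_of_le _ fun α _ => (norm_mul _ _).le) (hK (fun _ => 1) z hz)
    by_contra hlt1
    nlinarith
  have hSbdd : BddBelow S := ⟨1, hS1⟩
  have hχ1 : 1 ≤ sInf S := le_csInf ⟨_, hSne⟩ hS1
  have hm0 : (0 : ℝ) < m := by exact_mod_cast hm
  -- Homogeneity: `r` is admissible for the Bohr radius iff `r⁻ᵐ` is in `S`.
  have key : ∀ r : ℝ, 0 < r → ((∀ (c : (Fin n → ℕ) → ℂ) (z : Fin n → ℂ), ν z ≤ r →
      ∑ α ∈ Jm, ‖c α‖ * ‖∏ j, z j ^ α j‖ ≤ polNorm n ν Jm c) ↔ (r ^ m)⁻¹ ∈ S) := by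
    intro r hr
    have hscale : ∀ (s : ℝ), 0 < s → ∀ (c : (Fin n → ℕ) → ℂ) (z : Fin n → ℂ),
        ∑ α ∈ Jm, ‖c α‖ * ‖∏ j, ((s : ℂ) • z) j ^ α j‖
          = s ^ m * ∑ α ∈ Jm, ‖c α‖ * ‖∏ j, z j ^ α j‖ := by
      intro s hs c z
      rw [Finset.mul_sum]
      refine Finset.sum_congr rfl fun α hα => ?_
      rw [norm_monomial_smul (hsum α hα), Complex.norm_real, Real.norm_of_nonneg hs.le]
      ring
    constructor
    · refine fun h => ⟨by positivity, fun c z hz => ?_⟩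
      have h1 := h c ((r : ℂ) • z) (by
        rw [hsmul, Complex.norm_real, Real.norm_of_nonneg hr.le]
        nlinarith)
      rw [hscale r hr] at h1
      rw [inv_mul_eq_div, le_div_iff₀ (by positivity)]
      linarith
    · rintro ⟨_, h⟩ c z hz
      have h1 := h c (((r⁻¹ : ℝ) : ℂ) • z) (by
        rw [hsmul, Complex.norm_real, Real.norm_of_nonneg (by positivity), inv_mul_eq_div,
          div_le_one hr]
        exact hz)
      rw [hscale _ (by positivity), inv_pow] at h1
      exact le_of_mul_le_mul_left h1 (by positivity)
  rw [hχ]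
  set χ := sInf S
  have hχpos : 0 < χ := by linarith
  set ρ := χ ^ (-(1 : ℝ) / (m : ℝ)) with hρ
  have hρpos : 0 < ρ := Real.rpow_pos_of_pos hχpos _
  have hρm : ρ ^ m = χ⁻¹ := by
    rw [hρ, ← Real.rpow_natCast, ← Real.rpow_mul hχpos.le, div_mul_cancel₀ _ hm0.ne',
      Real.rpow_neg_one]
  have hρ1 : ρ ≤ 1 :=
    Real.rpow_le_one_of_one_le_of_nonpos hχ1 (div_nonpos_of_nonpos_of_nonneg (by norm_num) hm0.le)
  have hmem : ∀ r : ℝ, 0 < r → r < ρ → (0 ≤ r ∧ r < 1 ∧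
      ∀ (c : (Fin n → ℕ) → ℂ) (z : Fin n → ℂ), ν z ≤ r →
        ∑ α ∈ Jm, ‖c α‖ * ‖∏ j, z j ^ α j‖ ≤ polNorm n ν Jm c) := by
    intro r hr hrρ
    refine ⟨hr.le, by linarith, (key r hr).2 ⟨by positivity, fun c z hz => ?_⟩⟩
    have h1 : r ^ m < χ⁻¹ := hρm ▸ pow_lt_pow_left₀ hrρ hr.le (by omega)
    -- `S` is upward closed, so any number above its infimum belongs to it.
    obtain ⟨K, hK, hKr⟩ := exists_lt_of_csInf_lt ⟨_, hSne⟩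
      ((lt_inv_comm₀ (by positivity) hχpos).1 h1)
    exact (hK.2 c z hz).trans (mul_le_mul_of_nonneg_right hKr.le (polNorm_nonneg _ _))
  refine csSup_eq_of_forall_le_of_forall_lt_exists_gt ?_ ?_ ?_
  · exact ⟨ρ / 2, hmem _ (by positivity) (by linarith)⟩
  · rintro r ⟨hr0, _, hr⟩
    rcases hr0.eq_or_lt with h0 | h0
    · rw [← h0]; exact hρpos.le
    · have h1 := csInf_le hSbdd ((key r h0).1 hr)
      refine le_of_pow_le_pow_left₀ (n := m) (by omega) hρpos.le ?_
      rw [hρm]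
      exact (le_inv_comm₀ hχpos (by positivity)).1 h1
  · intro w hw
    obtain ⟨r, hr1, hr2⟩ := exists_between (max_lt hw hρpos)
    exact ⟨r, hmem r ((le_max_right _ _).trans_lt hr1) hr2, (le_max_left _ _).trans_lt hr1⟩
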